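/- arXiv:0902.0433 — 2 statements merged into one kernel-verified Lean document; each statement's English description precedes it below -/
import Mathlib

section
/- Let v ∈ Ω and m ∈ ℤ with v(m−1) ≠ v(m), and suppose that the sequence obtained from v by exchanging its values at sites m−1 and m belongs to Ω. Then for every n ≥ 1, in the unique (n−1, n)-partition (cᵢ)_{i∈ℤ} of v, m is a cut point (m = cᵢ for some i), the block beginning at site m+1 is sₙ, and either (a) the block ending at m is sₙ and is immediately preceded by an s_{n−1}-block, or (b) the block ending at m is s_{n−1} and is immediately preceded by an sₙ-block; moreover, if form (a) holds at level n then form (b) holds at level n+1, and if form (b) holds at level n then form (a) holds at level n+1. -/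
open scoped Classical

noncomputable section

/-- The Gauss map. -/
def gaussMap (x : ℝ) : ℝ := Int.fract x⁻¹

/-- `pq α k` is the partial quotient `a_{k+1}` of the continued fraction of `α`. -/
def pq (α : ℝ) (k : ℕ) : ℕ := ⌊(gaussMap^[k] α)⁻¹⌋₊

/-- `qd α (n+1)` is the convergent denominator `q_n`; `qd α 0 = q_{-1} = 0`, `qd α 1 = q₀ = 1`. -/
def qd (α : ℝ) : ℕ → ℕ
  | 0 => 0
  | 1 => 1
  | (n+2) => pq α n * qd α (n+1) + qd α n

/-- The circle map sequence of rotation number `α` (value `true` means letter `1`). -/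
def v0 (α : ℝ) (n : ℤ) : Bool := decide (1 - α ≤ Int.fract ((n : ℝ) * α))

/-- The word `(v₀(m+1), …, v₀(m+n))`. -/
def word (α : ℝ) (m n : ℕ) : List Bool :=
  (List.range n).map (fun i => v0 α ((m : ℤ) + 1 + i))

/-- `w` is a factor (admissible word) of `v₀`. -/
def IsFactor (α : ℝ) (w : List Bool) : Prop := ∃ m : ℕ, w = word α m w.length

/-- `w` occurs as a subword of the prefix `(v₀(1), …, v₀(N))`. -/
def OccursIn (α : ℝ) (w : List Bool) (N : ℕ) : Prop :=
  ∃ m : ℕ, m + w.length ≤ N ∧ w = word α m w.length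

/-- `exhaust α n` is `f(n)`: the least `N` such that every factor of length `n`
occurs in `(v₀(1), …, v₀(N))`. -/
def exhaust (α : ℝ) (n : ℕ) : ℕ :=
  sInf {N | ∀ w : List Bool, w.length = n → IsFactor α w → OccursIn α w N}

/-- number of occurrences of `w` in the prefix `(v₀(1), …, v₀(N))`. -/
def occCount (α : ℝ) (w : List Bool) (N : ℕ) : ℕ :=
  ((Finset.range N).filter (fun m => m + w.length ≤ N ∧ word α m w.length = w)).card

/-- the word `(v(m), v(m+1), …, v(m+n-1))` of a two-sided sequence. -/
def wordAt (v : ℤ → Bool) (m : ℤ) (n : ℕ) : List Bool :=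
  (List.range n).map (fun i => v (m + i))

/-- the hull `Ω`: closure of the set of translates of `v₀`. -/
def hull (α : ℝ) : Set (ℤ → Bool) :=
  closure {u | ∃ m : ℤ, u = fun n => v0 α (n - m)}


/-- `sw α (n+1)` is the word `sₙ`: `sw α 0 = s₋₁ = 1`, `sw α 1 = s₀ = 0`,
`sw α 2 = s₁ = s₀^{a₁-1} s₋₁`, and `s_{n+1} = sₙ^{a_{n+1}} s_{n-1}`. -/
def sw (α : ℝ) : ℕ → List Bool
  | 0 => [true]
  | 1 => [false]
  | 2 => (List.replicate (pq α 0 - 1) [false]).flatten ++ [true]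
  | (n+3) => (List.replicate (pq α (n+1)) (sw α (n+2))).flatten ++ sw α (n+1)

/-- The block of the partition `c` starting at index `i` is the word `s_{lev - 1}`
(of length `q_{lev-1} = qd α lev`), occupying sites `c i + 1, …, c (i+1)` of `v`. -/
def BlockIs (α : ℝ) (v : ℤ → Bool) (c : ℤ → ℤ) (i : ℤ) (lev : ℕ) : Prop :=
  c (i + 1) - c i = (qd α lev : ℤ) ∧ wordAt v (c i + 1) (qd α lev) = sw α lev

/-- `c` is an `(n-1, n)`-partition of `v`: a strictly increasing two-sided sequence of
cut points, with `c 0 ≤ 0 < c 1`, tending to `±∞`, each of whose blocks is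
`s_{n-1}` or `sₙ`. -/
def IsPartition (α : ℝ) (v : ℤ → Bool) (n : ℕ) (c : ℤ → ℤ) : Prop :=
  StrictMono c ∧ c 0 ≤ 0 ∧ 0 < c 1 ∧
  Filter.Tendsto c Filter.atTop Filter.atTop ∧
  Filter.Tendsto c Filter.atBot Filter.atBot ∧
  ∀ i : ℤ, BlockIs α v c i n ∨ BlockIs α v c i (n + 1)

/-- Form (a) at level `n` around the site `m`: `m` is a cut point, the block beginning at
`m + 1` is `sₙ`, the block ending at `m` is `sₙ`, and it is immediately preceded by an
`s_{n-1}`-block. -/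
def FormA (α : ℝ) (v : ℤ → Bool) (m : ℤ) (n : ℕ) (c : ℤ → ℤ) : Prop :=
  ∃ i : ℤ, c i = m ∧ BlockIs α v c i (n + 1) ∧
    BlockIs α v c (i - 1) (n + 1) ∧ BlockIs α v c (i - 2) n

/-- Form (b) at level `n` around the site `m`: `m` is a cut point, the block beginning at
`m + 1` is `sₙ`, the block ending at `m` is `s_{n-1}`, and it is immediately preceded by
an `sₙ`-block. -/
def FormB (α : ℝ) (v : ℤ → Bool) (m : ℤ) (n : ℕ) (c : ℤ → ℤ) : Prop :=
  ∃ i : ℤ, c i = m ∧ BlockIs α v c i (n + 1) ∧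
    BlockIs α v c (i - 1) n ∧ BlockIs α v c (i - 2) (n + 1)

/-!
Since `v` and the exchanged sequence both lie in the hull, the word of length `n` to the right of
`m`, preceded by either letter, is a factor of `v₀`; hence it contains exactly `⌊(n + 1) α⌋` ones.
So `v` reads `v₀(1), v₀(2), …` to the right of `m` and, by the same argument, its mirror image to
the left of `m - 1`.

The two products `s_{n-1} sₙ` and `sₙ s_{n-1}` are `z x y` and `z y x` for a palindrome `z` and
letters `x ≠ y`, where `z` followed by the last letter of `sₙ` is a prefix of `v₀(1), v₀(2), …`.
Thus `v` reads `z v(m-1) v(m) z` around `m`, so that one of the two products ends at `m`, and the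
letter `v(m)` tells which. It remains to see that the partition cuts there: the cut points are
precisely the sites at which `z` occurs (shown by refining the partition down to single letters),
and the letter after `z` determines the block. Since the last letter of `sₙ` alternates with `n`,
so does the form.
-/

/-! ### Occurrences of words -/

/-- The word `w` occupies the sites `t + 1, …, t + |w|` of `v`; the shift by one matches the cut
points of `BlockIs`. -/
def Occ (v : ℤ → Bool) (t : ℤ) (w : List Bool) : Prop := wordAt v (t + 1) w.length = w

section Occ

variable {v : ℤ → Bool} {t : ℤ}

-- In `wordAt` the integer index makes `List.range n` a `List ℤ`, cast through the list monad.
lemma wordAt_eq_map (v : ℤ → Bool) (t : ℤ) (n : ℕ) :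
    wordAt v t n = (List.range n).map fun i : ℕ => v (t + i) := by
  rw [wordAt, bind_pure_comp]
  exact List.map_map

lemma length_wordAt (v : ℤ → Bool) (t : ℤ) (n : ℕ) : (wordAt v t n).length = n := by
  simp [wordAt_eq_map]

lemma wordAt_add (v : ℤ → Bool) (t : ℤ) (m n : ℕ) :
    wordAt v t (m + n) = wordAt v t m ++ wordAt v (t + m) n := by
  simp [wordAt_eq_map, List.range_add, add_assoc]

lemma wordAt_one (v : ℤ → Bool) (t : ℤ) : wordAt v t 1 = [v t] := by simp [wordAt_eq_map]

lemma wordAt_succ (v : ℤ → Bool) (t : ℤ) (n : ℕ) :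
    wordAt v t (n + 1) = wordAt v t n ++ [v (t + n)] := by
  rw [wordAt_add, wordAt_one]

lemma wordAt_succ' (v : ℤ → Bool) (t : ℤ) (n : ℕ) :
    wordAt v t (n + 1) = v t :: wordAt v (t + 1) n := by
  rw [add_comm, wordAt_add, wordAt_one, Nat.cast_one, List.singleton_append]

lemma wordAt_congr {u v : ℤ → Bool} {s t : ℤ} {n : ℕ} (h : ∀ i : ℕ, i < n → u (s + i) = v (t + i)) :
    wordAt u s n = wordAt v t n := by
  rw [wordAt_eq_map, wordAt_eq_map]
  exact List.map_congr_left fun i hi => h i (List.mem_range.1 hi)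

lemma occ_nil (v : ℤ → Bool) (t : ℤ) : Occ v t [] := by simp [Occ, wordAt_eq_map]

lemma occ_append {w₁ w₂ : List Bool} :
    Occ v t (w₁ ++ w₂) ↔ Occ v t w₁ ∧ Occ v (t + w₁.length) w₂ := by
  rw [Occ, List.length_append, wordAt_add, add_right_comm]
  exact ⟨fun h => List.append_inj h (length_wordAt _ _ _), fun h => by rw [h.1, h.2]⟩

lemma occ_singleton {b : Bool} : Occ v t [b] ↔ v (t + 1) = b := by
  simp [Occ, wordAt_one]

lemma occ_replicate {n : ℕ} {b : Bool} :
    Occ v t (List.replicate n b) ↔ ∀ i : ℤ, t < i → i ≤ t + n → v i = b := by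
  induction n with
  | zero => simpa [occ_nil] using fun i hi hi' => absurd hi (by lia)
  | succ n ih =>
    rw [List.replicate_succ', occ_append, occ_singleton, ih, List.length_replicate]
    refine ⟨fun h i hi hi' => ?_, fun h => ⟨fun i hi hi' => h i hi (by lia), h _ (by lia) (by lia)⟩⟩
    obtain hlt | rfl : i ≤ t + n ∨ i = t + n + 1 := by lia
    · exact h.1 i hi hlt
    · exact h.2

lemma Occ.of_isPrefix {w₁ w₂ : List Bool} (h : Occ v t w₂) (hp : w₁ <+: w₂) : Occ v t w₁ := by
  obtain ⟨r, rfl⟩ := hp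
  exact (occ_append.1 h).1

lemma Occ.apply_of_suffix {w : List Bool} {b : Bool} (h : Occ v t w) (hb : [b] <:+ w) :
    v (t + w.length) = b := by
  obtain ⟨r, rfl⟩ := hb
  simpa [add_assoc] using occ_singleton.1 (occ_append.1 h).2

lemma Occ.not_concat_not {w : List Bool} {b : Bool} (h : Occ v t (w ++ [b])) :
    ¬ Occ v t (w ++ [!b]) := by
  intro h'
  rw [occ_append, occ_singleton] at h h'
  simpa using h.2.symm.trans h'.2

end Occ

/-! ### Standard pairs -/

/-- `(S, L)` arises from the pair `(1, 0)` by finitely many steps `(S, L) ↦ (L, Lᵃ S)`; `c` is its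
central word, the longest common prefix of `L S` and `S L`, and `e` is the letter that follows `c`
in `L S`. Allowing `a = 0` covers the exponent `a₁ - 1` in `s₁ = s₀^{a₁-1} s₋₁`. -/
inductive IsStandardPair : List Bool → List Bool → List Bool → Bool → Prop
  | base : IsStandardPair [true] [false] [] false
  | step (a : ℕ) {S L c : List Bool} {e : Bool} : IsStandardPair S L c e →
      IsStandardPair L ((List.replicate a L).flatten ++ S) ((List.replicate a L).flatten ++ c) (!e)

lemma flatten_replicate_append_comm {β : Type*} (n : ℕ) (w : List β) :
    (List.replicate n w).flatten ++ w = w ++ (List.replicate n w).flatten := by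
  rw [← List.flatten_cons, ← List.replicate_succ, List.replicate_succ', List.flatten_concat]

lemma flatten_replicate_append_of_append_eq {β : Type*} {w w' c : List β} (h : w ++ c = c ++ w')
    (n : ℕ) : (List.replicate n w).flatten ++ c = c ++ (List.replicate n w').flatten := by
  induction n with
  | zero => simp
  | succ n ih =>
    rw [List.replicate_succ, List.flatten_cons, List.append_assoc, ih, ← List.append_assoc, h,
      List.append_assoc, ← List.flatten_cons, ← List.replicate_succ]

lemma concat_prefix_append_of_append_eq {β : Type*} {x y c r r' : List β} {b : β} (hx : x ≠ [])
    (hxy : x ++ y = c ++ b :: r) (hyx : y ++ x = c ++ r') : c ++ [b] <+: x ++ c := by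
  -- Both words are prefixes of `x y x`.
  refine List.prefix_of_prefix_length_le (l₃ := x ++ y ++ x) ⟨r ++ x, by simp [hxy]⟩
    ⟨r', by simp [← hyx]⟩ ?_
  have := List.length_pos_iff.2 hx
  simp only [List.length_append, List.length_singleton]
  lia

namespace IsStandardPair

variable {S L c : List Bool} {e : Bool}

lemma ne_nil (h : IsStandardPair S L c e) : S ≠ [] ∧ L ≠ [] := by
  induction h with
  | base => simp
  | step a _ ih => exact ⟨ih.2, List.append_ne_nil_of_right_ne_nil _ ih.1⟩

lemma append_eq (h : IsStandardPair S L c e) : L ++ S = c ++ [e, !e] ∧ S ++ L = c ++ [!e, e] := by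
  induction h with
  | base => simp
  | step a _ ih =>
    constructor
    · rw [List.append_assoc, ih.2, List.append_assoc, Bool.not_not]
    · rw [← List.append_assoc, ← flatten_replicate_append_comm, List.append_assoc, ih.1,
        List.append_assoc, Bool.not_not]

lemma length_add_two (h : IsStandardPair S L c e) : c.length + 2 = S.length + L.length := by
  simpa using (congrArg List.length h.append_eq.2).symm

lemma suffix_long_and_short (h : IsStandardPair S L c e) : [e] <:+ L ∧ [!e] <:+ S := by
  induction h with
  | base => simp
  | step a _ ih => exact ⟨List.suffix_append_of_suffix ih.2, by simpa using ih.1⟩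

lemma concat_prefix_long (h : IsStandardPair S L c e) : c ++ [e] <+: L ++ c :=
  concat_prefix_append_of_append_eq h.ne_nil.2 h.append_eq.1 h.append_eq.2

lemma concat_prefix_short (h : IsStandardPair S L c e) : c ++ [!e] <+: S ++ c :=
  concat_prefix_append_of_append_eq h.ne_nil.1 h.append_eq.2 h.append_eq.1

lemma prefix_flatten_replicate (h : IsStandardPair S L c e) (n : ℕ) :
    c <+: (List.replicate n L).flatten ++ c := by
  induction n with
  | zero => simp
  | succ n ih =>
    rw [List.replicate_succ, List.flatten_cons, List.append_assoc]
    exact ((List.prefix_append _ _).trans h.concat_prefix_long).trans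
      ((List.prefix_append_right_inj L).2 ih)

lemma concat_prefix_flatten_replicate (h : IsStandardPair S L c e) (n : ℕ) :
    c ++ [e] <+: (List.replicate (n + 1) L).flatten ++ c := by
  rw [List.replicate_succ, List.flatten_cons, List.append_assoc]
  exact h.concat_prefix_long.trans
    ((List.prefix_append_right_inj L).2 (h.prefix_flatten_replicate n))

lemma concat_prefix_two_steps (h : IsStandardPair S L c e) (a b : ℕ) :
    c ++ [e] <+:
      (List.replicate (b + 1) ((List.replicate (a + 1) L).flatten ++ S)).flatten ++ L := by
  set L' := (List.replicate (a + 1) L).flatten ++ S with hL'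
  have hLL' : L <+: (List.replicate b L').flatten ++ L := by
    cases b with
    | zero => simp
    | succ b => simp [hL', List.replicate_succ]
  have hc : c ++ [e] <+: L' ++ L := by
    rw [hL', List.append_assoc, h.append_eq.2, ← List.append_assoc]
    exact (h.concat_prefix_flatten_replicate a).trans (List.prefix_append _ _)
  rw [List.replicate_succ, List.flatten_cons, List.append_assoc]
  exact hc.trans ((List.prefix_append_right_inj L').2 hLL')

lemma append_central (h : IsStandardPair S L c e) :
    c.reverse = c ∧ S ++ c = c ++ S.reverse ∧ L ++ c = c ++ L.reverse := by
  induction h with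
  | base => simp
  | @step a S L c _ _ ih =>
    obtain ⟨hc, hS, hL⟩ := ih
    have hLa := flatten_replicate_append_of_append_eq hL a
    have hrev : (List.replicate a L).flatten.reverse = (List.replicate a L.reverse).flatten := by
      simp [List.reverse_flatten]
    refine ⟨?_, ?_, ?_⟩
    · rw [List.reverse_append, hc, hrev, hLa]
    · rw [← List.append_assoc, ← flatten_replicate_append_comm, List.append_assoc, hL,
        List.append_assoc]
    · rw [List.reverse_append, hrev, List.append_assoc, List.append_assoc, hLa,
        ← List.append_assoc S, hS, List.append_assoc]

end IsStandardPair

/-! ### Cut sets -/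

/-- From the site `t` the sequence `v` reads the word `w` and thereby arrives at a site of `C`. -/
def ReadsTo (v : ℤ → Bool) (C : Set ℤ) (t : ℤ) (w : List Bool) : Prop :=
  Occ v t w ∧ t + w.length ∈ C

/-- From every site of `C` one can advance inside `C` along a block `S` or `L` of `v`, and `C` is
unbounded below: the set of cut points of a partition of `v` into blocks `S` and `L`, with the
disjointness of the blocks forgotten. -/
structure IsCutSet (v : ℤ → Bool) (S L : List Bool) (C : Set ℤ) : Prop where
  readsTo : ∀ t ∈ C, ReadsTo v C t S ∨ ReadsTo v C t L
  exists_le : ∀ t, ∃ u ∈ C, u ≤ t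

section CutSet

variable {v : ℤ → Bool} {C C' : Set ℤ} {t : ℤ} {S L c : List Bool} {e : Bool}

lemma ReadsTo.mono {w : List Bool} (h : ReadsTo v C t w) (hC : C ⊆ C') : ReadsTo v C' t w :=
  ⟨h.1, hC h.2⟩

lemma readsTo_append {w₁ w₂ : List Bool} :
    ReadsTo v C t (w₁ ++ w₂) ↔ Occ v t w₁ ∧ ReadsTo v C (t + w₁.length) w₂ := by
  simp only [ReadsTo, occ_append, List.length_append, Nat.cast_add, add_assoc, and_assoc]

lemma take_succ_prefix_append {β : Type*} {x c : List β} (hx : x ≠ []) (h : c <+: x ++ c) (n : ℕ) :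
    c.take (n + 1) <+: x ++ c.take n := by
  refine List.prefix_of_prefix_length_le ((List.take_prefix _ _).trans h)
    ((List.prefix_append_right_inj x).2 (List.take_prefix n c)) ?_
  have := List.length_pos_iff.2 hx
  simp only [List.length_take, List.length_append]
  lia

lemma IsCutSet.occ_central (hC : IsCutSet v S L C) (h : IsStandardPair S L c e) (ht : t ∈ C) :
    Occ v t c := by
  suffices ∀ n : ℕ, ∀ t ∈ C, Occ v t (c.take n) by simpa using this c.length t ht
  intro n
  induction n with
  | zero => simp [occ_nil]
  | succ n ih =>
    intro t ht
    have extend {x : List Bool} (hx : x ≠ []) (hp : c <+: x ++ c) (hr : ReadsTo v C t x) :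
        Occ v t (c.take (n + 1)) :=
      (occ_append.2 ⟨hr.1, ih _ hr.2⟩).of_isPrefix (take_succ_prefix_append hx hp n)
    exact (hC.readsTo t ht).elim
      (extend h.ne_nil.1 ((List.prefix_append _ _).trans h.concat_prefix_short))
      (extend h.ne_nil.2 ((List.prefix_append _ _).trans h.concat_prefix_long))

-- Cutting every block `Lᵃ S` into its factors.
lemma IsCutSet.refine {a : ℕ} (hC : IsCutSet v L ((List.replicate a L).flatten ++ S) C) :
    IsCutSet v S L
      (C ∪ {t | ∃ b < a, ReadsTo v C t ((List.replicate b L).flatten ++ S)}) := by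
  set C' := C ∪ {t | ∃ b < a, ReadsTo v C t ((List.replicate b L).flatten ++ S)}
  have hsub : C ⊆ C' := Set.subset_union_left
  have reads (b : ℕ) (hb : b ≤ a) (t : ℤ)
      (h : ReadsTo v C t ((List.replicate b L).flatten ++ S)) :
      ReadsTo v C' t S ∨ ReadsTo v C' t L := by
    cases b with
    | zero => exact .inl (ReadsTo.mono (by simpa using h) hsub)
    | succ b =>
      rw [List.replicate_succ, List.flatten_cons, List.append_assoc, readsTo_append] at h
      exact .inr ⟨h.1, .inr ⟨b, hb, h.2⟩⟩
  refine ⟨?_, fun t => ?_⟩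
  · rintro t (ht | ⟨b, hb, h⟩)
    · exact (hC.readsTo t ht).elim (fun h => .inr (h.mono hsub)) (reads a le_rfl t)
    · exact reads b hb.le t h
  · obtain ⟨u, hu, hut⟩ := hC.exists_le t
    exact ⟨u, hsub hu, hut⟩

theorem IsStandardPair.mem_of_occ (h : IsStandardPair S L c e) (hC : IsCutSet v S L C)
    (ht : Occ v t c) : t ∈ C := by
  induction h generalizing C t with
  | base =>
    obtain ⟨u, hu, hut⟩ := hC.exists_le t
    exact Int.leInduction hu (fun s _ hs => (hC.readsTo s hs).elim And.right And.right) t hut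
  | @step a S L c e h ih =>
    rcases ih hC.refine (ht.of_isPrefix (h.prefix_flatten_replicate a)) with htC | ⟨b, hb, hbS, hbC⟩
    · exact htC
    -- After `Lᵇ` the sequence would read both `S L = c ē e` and `c e`.
    exfalso
    obtain ⟨d, rfl⟩ := Nat.exists_eq_add_of_lt hb
    have hL : Occ v (t + ((List.replicate b L).flatten ++ S).length) L := by
      rcases hC.readsTo _ hbC with hr | hr
      · exact hr.1
      · refine hr.1.of_isPrefix ?_
        simp [List.replicate_succ]
    have hSL := occ_append.2 ⟨hbS, hL⟩
    rw [List.append_assoc, h.append_eq.2, occ_append] at hSL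
    rw [add_assoc, List.replicate_add, List.flatten_append, List.append_assoc, occ_append] at ht
    exact (ht.2.of_isPrefix (h.concat_prefix_flatten_replicate d)).not_concat_not
      (hSL.2.of_isPrefix ⟨[e], by simp⟩)

end CutSet

/-! ### Counting ones -/

section Count

variable {α : ℝ}

lemma floor_add_one_mul (hα : α ∈ Set.Ioo 0 1) (n : ℤ) :
    ⌊((n : ℝ) + 1) * α⌋ = ⌊(n : ℝ) * α⌋ + (v0 α n).toNat := by
  have h0 := Int.fract_nonneg ((n : ℝ) * α)
  have h1 := Int.fract_lt_one ((n : ℝ) * α)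
  have hfract := Int.floor_add_fract ((n : ℝ) * α)
  obtain ⟨hα0, hα1⟩ := hα
  rw [Int.floor_eq_iff, v0]
  by_cases h : 1 - α ≤ Int.fract ((n : ℝ) * α) <;> simp only [h, decide_true, decide_false,
    Bool.toNat_true, Bool.toNat_false] <;> push_cast <;> constructor <;> linarith

lemma bool_toNat_injective : Function.Injective Bool.toNat := by decide

lemma count_true_singleton (b : Bool) : [b].count true = b.toNat := by cases b <;> rfl

lemma count_wordAt_v0 (hα : α ∈ Set.Ioo 0 1) (m : ℤ) (n : ℕ) :
    ((wordAt (v0 α) m n).count true : ℤ) = ⌊((m : ℝ) + n) * α⌋ - ⌊(m : ℝ) * α⌋ := by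
  induction n with
  | zero => simp [wordAt_eq_map]
  | succ n ih =>
    have := floor_add_one_mul hα (m + n)
    rw [wordAt_succ, List.count_append, count_true_singleton]
    push_cast at this ⊢
    rw [ih, ← add_assoc, this]
    ring

lemma count_wordAt_v0_one (hα : α ∈ Set.Ioo 0 1) (n : ℕ) :
    ((wordAt (v0 α) 1 n).count true : ℤ) = ⌊((n : ℝ) + 1) * α⌋ := by
  have : ⌊α⌋ = 0 := Int.floor_eq_zero_iff.2 ⟨hα.1.le, hα.2⟩
  rw [count_wordAt_v0 hα, Int.cast_one, one_mul, this, sub_zero, add_comm (1 : ℝ)]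

lemma exists_wordAt_eq_of_mem_hull {u : ℤ → Bool} (hu : u ∈ hull α) (m : ℤ) (n : ℕ) :
    ∃ k : ℤ, wordAt u m n = wordAt (v0 α) k n := by
  have hnear : ∀ᶠ x in nhds u, ∀ i ∈ Finset.range n, x (m + i) = u (m + i) :=
    (Filter.eventually_all_finset _).2 fun i _ =>
      (continuous_apply (m + (i : ℤ))).continuousAt.eventually
        ((isOpen_discrete {u (m + i)}).mem_nhds rfl)
  obtain ⟨_, ⟨k, rfl⟩, hx⟩ := (mem_closure_iff_frequently.1 hu).and_eventually hnear |>.exists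
  refine ⟨m - k, wordAt_congr fun i hi => ?_⟩
  rw [← hx i (Finset.mem_range.2 hi), sub_add_eq_add_sub]

lemma count_wordAt_mem_Icc (hα : α ∈ Set.Ioo 0 1) {u : ℤ → Bool} (hu : u ∈ hull α) (m : ℤ)
    (n : ℕ) :
    ((wordAt u m n).count true : ℤ) ∈ Set.Icc ⌊(n : ℝ) * α⌋ (⌊(n : ℝ) * α⌋ + 1) := by
  obtain ⟨k, hk⟩ := exists_wordAt_eq_of_mem_hull hu m n
  have hle := Int.le_floor_add ((k : ℝ) * α) (n * α)
  have hge := Int.le_floor_add_floor ((k : ℝ) * α) (n * α)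
  rw [hk, count_wordAt_v0 hα, add_mul, Set.mem_Icc]
  lia

end Count

/-! ### Sequences with an exchangeable pair -/

/-- The sequence `v` with its values at the sites `m - 1` and `m` exchanged. -/
def exchange (v : ℤ → Bool) (m : ℤ) : ℤ → Bool :=
  fun z => if z = m - 1 then v m else if z = m then v (m - 1) else v z

section Exchange

variable {α : ℝ} {v : ℤ → Bool} {m : ℤ}

lemma count_eq_of_both_extensions {f n : ℤ} {b b' : Bool} (hb : b ≠ b')
    (h : n + b.toNat ∈ Set.Icc f (f + 1)) (h' : n + b'.toNat ∈ Set.Icc f (f + 1)) : n = f := by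
  rw [Set.mem_Icc] at h h'
  cases b <;> cases b' <;> simp at hb h h' <;> lia

lemma wordAt_exchange_right (v : ℤ → Bool) (m : ℤ) (n : ℕ) :
    wordAt (exchange v m) m (n + 1) = v (m - 1) :: wordAt v (m + 1) n := by
  rw [wordAt_succ']
  congr 1
  · rw [exchange, if_neg (by lia), if_pos rfl]
  · exact wordAt_congr fun i _ => by
      rw [exchange, if_neg (by lia), if_neg (by lia)]

lemma wordAt_exchange_left (v : ℤ → Bool) (m : ℤ) (n : ℕ) :
    wordAt (exchange v m) (m - 1 - n) (n + 1) = wordAt v (m - 1 - n) n ++ [v m] := by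
  rw [wordAt_succ]
  congr 1
  · exact wordAt_congr fun i hi => by
      rw [exchange, if_neg (by lia), if_neg (by lia)]
  · simp [exchange]

variable (hα : α ∈ Set.Ioo 0 1) (hv : v ∈ hull α) (hswap : exchange v m ∈ hull α)
  (hne : v (m - 1) ≠ v m)

include hα hv hswap hne

-- Preceding the word by either letter yields a factor of `v₀`, which pins its number of ones.
lemma count_wordAt_right (n : ℕ) :
    ((wordAt v (m + 1) n).count true : ℤ) = ⌊((n : ℝ) + 1) * α⌋ := by
  have h := count_wordAt_mem_Icc hα hv m (n + 1)
  have h' := count_wordAt_mem_Icc hα hswap m (n + 1)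
  rw [wordAt_succ', ← List.singleton_append, List.count_append, count_true_singleton] at h
  rw [wordAt_exchange_right, ← List.singleton_append, List.count_append,
    count_true_singleton] at h'
  push_cast [add_comm (Bool.toNat _ : ℤ)] at h h'
  exact count_eq_of_both_extensions hne h' h

lemma count_wordAt_left (n : ℕ) :
    ((wordAt v (m - 1 - n) n).count true : ℤ) = ⌊((n : ℝ) + 1) * α⌋ := by
  have h := count_wordAt_mem_Icc hα hv (m - 1 - n) (n + 1)
  have h' := count_wordAt_mem_Icc hα hswap (m - 1 - n) (n + 1)
  rw [wordAt_succ, sub_add_cancel, List.count_append, count_true_singleton] at h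
  rw [wordAt_exchange_left, List.count_append, count_true_singleton] at h'
  push_cast at h h'
  exact count_eq_of_both_extensions hne h h'

lemma wordAt_right_eq (n : ℕ) : wordAt v (m + 1) n = wordAt (v0 α) 1 n := by
  induction n with
  | zero => simp [wordAt_eq_map]
  | succ n ih =>
    have hcount := (count_wordAt_right hα hv hswap hne (n + 1)).trans
      (count_wordAt_v0_one hα (n + 1)).symm
    rw [wordAt_succ, wordAt_succ, ih, List.count_append, List.count_append, count_true_singleton,
      count_true_singleton] at hcount
    have hlast : v (m + 1 + n) = v0 α (1 + n) := bool_toNat_injective (by lia)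
    rw [wordAt_succ, wordAt_succ, ih, hlast]

lemma wordAt_left_eq (n : ℕ) : wordAt v (m - 1 - n) n = (wordAt (v0 α) 1 n).reverse := by
  induction n with
  | zero => simp [wordAt_eq_map]
  | succ n ih =>
    have hcount := (count_wordAt_left hα hv hswap hne (n + 1)).trans
      (count_wordAt_v0_one hα (n + 1)).symm
    have hsite : m - 1 - ((n + 1 : ℕ) : ℤ) + 1 = m - 1 - n := by lia
    rw [wordAt_succ', wordAt_succ, hsite, ih, ← List.singleton_append, List.count_append,
      List.count_append, List.count_reverse, count_true_singleton, count_true_singleton] at hcount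
    have hfirst : v (m - 1 - (n + 1 : ℕ)) = v0 α (1 + n) := bool_toNat_injective (by lia)
    rw [wordAt_succ', wordAt_succ, hsite, ih, List.reverse_concat, hfirst]

lemma occ_right {w : List Bool} (hw : Occ (v0 α) 0 w) : Occ v m w := by
  rw [Occ, wordAt_right_eq hα hv hswap hne]
  simpa [Occ] using hw

lemma occ_left {w : List Bool} (hw : Occ (v0 α) 0 w) : Occ v (m - 2 - w.length) w.reverse := by
  rw [Occ, List.length_reverse, show m - 2 - (w.length : ℤ) + 1 = m - 1 - w.length by ring,
    wordAt_left_eq hα hv hswap hne]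
  simpa [Occ] using hw

end Exchange

/-! ### Renormalization -/

section Renormalization

variable {α : ℝ}

lemma irrational_gaussMap (hirr : Irrational α) : Irrational (gaussMap α) :=
  (irrational_inv_iff.2 hirr).sub_intCast _

lemma gaussMap_mem_Ioo (hirr : Irrational α) : gaussMap α ∈ Set.Ioo 0 1 :=
  ⟨(Int.fract_nonneg _).lt_of_ne' (irrational_gaussMap hirr).ne_zero, Int.fract_lt_one _⟩

lemma pq_succ (α : ℝ) (k : ℕ) : pq α (k + 1) = pq (gaussMap α) k := by
  rw [pq, pq, Function.iterate_succ_apply]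

lemma one_le_pq (hirr : Irrational α) (hα : α ∈ Set.Ioo 0 1) (k : ℕ) : 1 ≤ pq α k := by
  induction k generalizing α with
  | zero => exact (Nat.one_le_floor_iff _).2 ((one_le_inv₀ hα.1).2 hα.2.le)
  | succ k ih => exact pq_succ α k ▸ ih (irrational_gaussMap hirr) (gaussMap_mem_Ioo hirr)

lemma floor_mul_inv (h0 : 0 ≤ α) (j : ℕ) :
    ⌊(j : ℝ) * α⁻¹⌋ = j * pq α 0 + ⌊(j : ℝ) * gaussMap α⌋ := by
  have hinv : α⁻¹ = pq α 0 + gaussMap α := by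
    rw [gaussMap, ← Int.self_sub_floor, pq, Function.iterate_zero_apply,
      natCast_floor_eq_intCast_floor (inv_nonneg.2 h0)]
    ring
  rw [hinv, mul_add, ← Nat.cast_mul, Int.floor_natCast_add, Nat.cast_mul]

lemma floor_mul_eq_of_mem_Ioc (hirr : Irrational α) (h0 : 0 < α) {j : ℕ} {n : ℤ}
    (hn : n ∈ Set.Ioc ⌊(j : ℝ) * α⁻¹⌋ ⌊((j : ℝ) + 1) * α⁻¹⌋) : ⌊(n : ℝ) * α⌋ = j := by
  obtain ⟨hlo, hhi⟩ := hn
  rw [Int.floor_lt, ← div_eq_mul_inv, div_lt_iff₀ h0] at hlo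
  rw [Int.le_floor, ← div_eq_mul_inv, le_div_iff₀ h0] at hhi
  rw [Int.floor_eq_iff]
  refine ⟨by exact_mod_cast hlo.le, lt_of_le_of_ne (by exact_mod_cast hhi) fun h => ?_⟩
  have hn0 : n ≠ 0 := by
    rintro rfl
    have : (0 : ℝ) ≤ j := Nat.cast_nonneg j
    simp only [Int.cast_zero, zero_mul] at hlo
    linarith
  exact (hirr.intCast_mul hn0).ne_int (j + 1) (by push_cast at h ⊢; exact h)

lemma sw_add_three (α : ℝ) (n : ℕ) :
    sw α (n + 3) = (List.replicate (pq α (n + 1)) (sw α (n + 2))).flatten ++ sw α (n + 1) := rfl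

lemma sw_two (α : ℝ) : sw α 2 = List.replicate (pq α 0 - 1) false ++ [true] := by
  rw [sw, List.flatten_replicate_singleton]

lemma length_sw_two (h : 1 ≤ pq α 0) : (sw α 2).length = pq α 0 := by
  rw [sw_two, List.length_append, List.length_replicate, List.length_singleton,
    Nat.sub_add_cancel h]

-- The `j`-th one of `v₀` on the sites `n ≥ 1` stands at `⌊j / α⌋`.
lemma occ_v0_run (hirr : Irrational α) (hα : α ∈ Set.Ioo 0 1) (j : ℕ) :
    Occ (v0 α) ⌊(j : ℝ) * α⁻¹⌋
      (List.replicate (v0 (gaussMap α) j).toNat false ++ sw α 2) := by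
  have hnext : ⌊((j : ℝ) + 1) * α⁻¹⌋ = ⌊(j : ℝ) * α⁻¹⌋ + pq α 0 + (v0 (gaussMap α) j).toNat := by
    have h := floor_mul_inv hα.1.le (j + 1)
    have hβ := floor_add_one_mul (gaussMap_mem_Ioo hirr) j
    push_cast at h hβ
    rw [h, hβ, floor_mul_inv hα.1.le]
    ring
  have hpq := one_le_pq hirr hα 0
  have hfloor (n : ℤ) := floor_mul_eq_of_mem_Ioc hirr hα.1 (j := j) (n := n)
  have hstep (n : ℤ) := floor_add_one_mul hα n
  rw [sw_two, ← List.append_assoc, ← List.replicate_add, occ_append, occ_replicate, occ_singleton,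
    List.length_replicate]
  refine ⟨fun n hn hn' => ?_, ?_⟩
  · have h := hfloor (n + 1) ⟨by lia, by lia⟩
    rw [Int.cast_add, Int.cast_one, hstep, hfloor n ⟨hn, by lia⟩] at h
    exact Bool.toNat_eq_zero.1 (by lia)
  · have hsite : ⌊(j : ℝ) * α⁻¹⌋ + ((v0 (gaussMap α) j).toNat + (pq α 0 - 1) : ℕ) + 1 =
        ⌊((j : ℝ) + 1) * α⁻¹⌋ := by lia
    have hfloor_succ : (j : ℤ) + 1 ≤ ⌊((⌊((j : ℝ) + 1) * α⁻¹⌋ : ℤ) + 1 : ℝ) * α⌋ := by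
      have h := Int.lt_floor_add_one (((j : ℝ) + 1) * α⁻¹)
      rw [← div_eq_mul_inv, div_lt_iff₀ hα.1] at h
      rw [← div_eq_mul_inv]
      exact Int.le_floor.2 (by push_cast; exact h.le)
    rw [hstep, hfloor _ ⟨by lia, le_rfl⟩] at hfloor_succ
    rw [hsite]
    exact Bool.toNat_eq_one.1 ((Bool.toNat_le _).antisymm (by lia))

/-- The substitution `0 ↦ s₁`, `1 ↦ s₁ s₀`, which carries the circle map sequence of `gaussMap α`
to that of `α`. -/
def renorm (α : ℝ) (w : List Bool) : List Bool :=
  w.flatMap fun b => sw α 2 ++ List.replicate b.toNat false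

lemma renorm_append (α : ℝ) (w₁ w₂ : List Bool) :
    renorm α (w₁ ++ w₂) = renorm α w₁ ++ renorm α w₂ := List.flatMap_append

lemma renorm_singleton (α : ℝ) (b : Bool) :
    renorm α [b] = sw α 2 ++ List.replicate b.toNat false := List.flatMap_singleton ..

lemma renorm_flatten_replicate (α : ℝ) (n : ℕ) (w : List Bool) :
    renorm α (List.replicate n w).flatten = (List.replicate n (renorm α w)).flatten := by
  induction n with
  | zero => rfl
  | succ n ih =>
    rw [List.replicate_succ, List.flatten_cons, renorm_append, ih, ← List.flatten_cons,
      ← List.replicate_succ]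

lemma length_renorm (h : 1 ≤ pq α 0) (w : List Bool) :
    (renorm α w).length = w.length * pq α 0 + w.count true := by
  induction w using List.reverseRecOn with
  | nil => simp [renorm]
  | append_singleton w b ih =>
    rw [renorm_append, renorm_singleton, List.length_append, ih, List.length_append,
      length_sw_two h, List.length_replicate, List.length_append, List.length_singleton,
      List.count_append, count_true_singleton]
    ring

lemma sw_succ_eq_renorm (h : 1 ≤ pq (gaussMap α) 0) :
    ∀ k : ℕ, sw α (k + 2) = renorm α (sw (gaussMap α) (k + 1))
  | 0 => by simp [sw, renorm]
  | 1 => by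
    obtain ⟨a, ha⟩ := Nat.exists_eq_add_of_le' h
    have hsw : sw (gaussMap α) 2 = (List.replicate a [false]).flatten ++ [true] := by
      rw [sw, ha, Nat.add_sub_cancel]
    rw [sw_add_three α 0, hsw, pq_succ, ha, renorm_append, renorm_flatten_replicate,
      renorm_singleton, renorm_singleton, List.replicate_succ', List.flatten_concat]
    simp [sw]
  | k + 2 => by
    rw [sw_add_three α (k + 1), sw_add_three (gaussMap α) k, pq_succ, sw_succ_eq_renorm h (k + 1),
      sw_succ_eq_renorm h k, renorm_append, renorm_flatten_replicate]

lemma occ_renorm (hirr : Irrational α) (hα : α ∈ Set.Ioo 0 1) {w : List Bool}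
    (hw : Occ (v0 (gaussMap α)) 0 w) : Occ (v0 α) 0 (renorm α w ++ sw α 2) := by
  have hpq := one_le_pq hirr hα 0
  have hβ := gaussMap_mem_Ioo hirr
  induction w using List.reverseRecOn with
  | nil =>
    have h := occ_v0_run hirr hα 0
    have hv : v0 (gaussMap α) 0 = false := by simpa [v0] using hβ.2
    simpa [renorm, hv] using h
  | append_singleton w b ih =>
    obtain ⟨hw, hb⟩ := occ_append.1 hw
    rw [occ_singleton, zero_add] at hb
    have hcount := count_wordAt_v0_one hβ w.length
    rw [show wordAt (v0 (gaussMap α)) 1 w.length = w from hw] at hcount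
    have hsite := floor_mul_inv hα.1.le (w.length + 1)
    have hrun := occ_v0_run hirr hα (w.length + 1)
    push_cast at hsite hrun
    rw [hb] at hrun
    have hlen : ((renorm α w ++ sw α 2).length : ℤ) = ⌊((w.length : ℝ) + 1) * α⁻¹⌋ := by
      rw [List.length_append, length_renorm hpq, length_sw_two hpq, hsite, ← hcount]
      push_cast
      ring
    rw [renorm_append, renorm_singleton, ← List.append_assoc, List.append_assoc, occ_append, hlen,
      zero_add]
    exact ⟨ih hw, hrun⟩

lemma occ_v0_sw (hirr : Irrational α) (hα : α ∈ Set.Ioo 0 1) (k : ℕ) :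
    Occ (v0 α) 0 (sw α (k + 2)) := by
  induction k generalizing α with
  | zero => exact occ_renorm hirr hα (occ_nil _ _)
  | succ k ih =>
    have hβ := gaussMap_mem_Ioo hirr
    rw [sw_succ_eq_renorm (one_le_pq (irrational_gaussMap hirr) hβ 0)]
    exact (occ_renorm hirr hα (ih (irrational_gaussMap hirr) hβ)).of_isPrefix
      (List.prefix_append _ _)

end Renormalization

/-! ### Partitions into standard words -/

section Partition

variable {α : ℝ} {v : ℤ → Bool} {c : ℤ → ℤ} {n : ℕ} {t i : ℤ} {z : List Bool} {e : Bool}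

lemma length_sw (h : 1 ≤ pq α 0) : ∀ k : ℕ, (sw α (k + 1)).length = qd α (k + 1)
  | 0 => rfl
  | 1 => by simp [length_sw_two h, qd]
  | k + 2 => by
    rw [sw_add_three, List.length_append, List.length_flatten, List.map_replicate,
      List.sum_replicate, length_sw h (k + 1), length_sw h k, smul_eq_mul]
    rfl

lemma decide_odd_add_one (n : ℕ) : decide (Odd (n + 1)) = !decide (Odd n) := by
  simp only [Nat.odd_add_one, decide_not]

lemma exists_isStandardPair (α : ℝ) :
    ∀ n : ℕ, ∃ z, IsStandardPair (sw α n) (sw α (n + 1)) z (decide (Odd n))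
  | 0 => ⟨[], .base⟩
  | n + 1 => by
    obtain ⟨z, hz⟩ := exists_isStandardPair α n
    rw [decide_odd_add_one]
    cases n with
    | zero => exact ⟨_, hz.step (pq α 0 - 1)⟩
    | succ n => exact ⟨_, hz.step (pq α (n + 1))⟩

lemma blockIs_iff (h : 1 ≤ pq α 0) :
    BlockIs α v c i (n + 1) ↔
      c (i + 1) = c i + (sw α (n + 1)).length ∧ Occ v (c i) (sw α (n + 1)) := by
  rw [BlockIs, Occ, length_sw h, sub_eq_iff_eq_add']

lemma FormA.apply_eq {m : ℤ} (hpq : 1 ≤ pq α 0)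
    (hz : IsStandardPair (sw α (n + 1)) (sw α (n + 2)) z e) (h : FormA α v m (n + 1) c) :
    v m = e := by
  obtain ⟨i, rfl, -, hblock, -⟩ := h
  obtain ⟨hnext, hocc⟩ := (blockIs_iff hpq).1 hblock
  have hlast := hocc.apply_of_suffix hz.suffix_long_and_short.1
  rwa [← hnext, sub_add_cancel] at hlast

lemma FormB.apply_eq {m : ℤ} (hpq : 1 ≤ pq α 0)
    (hz : IsStandardPair (sw α (n + 1)) (sw α (n + 2)) z e) (h : FormB α v m (n + 1) c) :
    v m = !e := by
  obtain ⟨i, rfl, -, hblock, -⟩ := h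
  obtain ⟨hnext, hocc⟩ := (blockIs_iff hpq).1 hblock
  have hlast := hocc.apply_of_suffix hz.suffix_long_and_short.2
  rwa [← hnext, sub_add_cancel] at hlast

lemma IsStandardPair.occ_v0_concat (hirr : Irrational α) (hα : α ∈ Set.Ioo 0 1)
    (hz : IsStandardPair (sw α (n + 1)) (sw α (n + 2)) z e) : Occ (v0 α) 0 (z ++ [e]) := by
  obtain ⟨a, ha⟩ := Nat.exists_eq_add_of_le' (one_le_pq hirr hα (n + 1))
  obtain ⟨b, hb⟩ := Nat.exists_eq_add_of_le' (one_le_pq hirr hα (n + 2))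
  have h := occ_v0_sw hirr hα (n + 2)
  rw [sw_add_three, sw_add_three, hb, ha] at h
  exact h.of_isPrefix (hz.concat_prefix_two_steps a b)

variable (hpq : 1 ≤ pq α 0) (hc : IsPartition α v (n + 1) c)
  (hz : IsStandardPair (sw α (n + 1)) (sw α (n + 2)) z e)

include hpq hc

lemma IsPartition.isCutSet : IsCutSet v (sw α (n + 1)) (sw α (n + 2)) (Set.range c) := by
  obtain ⟨-, -, -, -, hbot, hblock⟩ := hc
  refine ⟨?_, fun t => ?_⟩
  · rintro _ ⟨i, rfl⟩
    refine (hblock i).imp (fun h => ?_) (fun h => ?_) <;>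
      exact ⟨((blockIs_iff hpq).1 h).2, i + 1, ((blockIs_iff hpq).1 h).1⟩
  · obtain ⟨i, hi⟩ := (hbot.eventually_le_atBot t).exists
    exact ⟨c i, ⟨i, rfl⟩, hi⟩

include hz

lemma blockIs_long_of_occ (h : Occ v (c i) (z ++ [e])) : BlockIs α v c i (n + 2) := by
  refine (hc.2.2.2.2.2 i).resolve_left fun hS => ?_
  obtain ⟨hnext, hS⟩ := (blockIs_iff hpq).1 hS
  have hcentral := (hc.isCutSet hpq).occ_central hz ⟨i + 1, rfl⟩
  exact h.not_concat_not ((occ_append.2 ⟨hS, hnext ▸ hcentral⟩).of_isPrefix hz.concat_prefix_short)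

lemma blockIs_short_of_occ (h : Occ v (c i) (z ++ [!e])) : BlockIs α v c i (n + 1) := by
  refine (hc.2.2.2.2.2 i).resolve_right fun hL => ?_
  obtain ⟨hnext, hL⟩ := (blockIs_iff hpq).1 hL
  have hcentral := (hc.isCutSet hpq).occ_central hz ⟨i + 1, rfl⟩
  exact ((occ_append.2 ⟨hL, hnext ▸ hcentral⟩).of_isPrefix hz.concat_prefix_long).not_concat_not h

lemma formA_of_occ (h : Occ v t (sw α (n + 1) ++ (sw α (n + 2) ++ (z ++ [e])))) :
    FormA α v (t + (sw α (n + 1)).length + (sw α (n + 2)).length) (n + 1) c := by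
  have hSz : Occ v t (z ++ [!e]) := h.of_isPrefix <| by
    rw [← List.append_assoc, hz.append_eq.2]
    exact ⟨e :: (z ++ [e]), by simp⟩
  obtain ⟨i, rfl⟩ := hz.mem_of_occ (hc.isCutSet hpq) (hSz.of_isPrefix (List.prefix_append _ _))
  have hS := blockIs_short_of_occ hpq hc hz hSz
  obtain ⟨hnext, -⟩ := (blockIs_iff hpq).1 hS
  have hLe := (occ_append.1 h).2
  rw [← hnext] at hLe ⊢
  have hL := blockIs_long_of_occ hpq hc hz <| hLe.of_isPrefix <| hz.concat_prefix_long.trans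
    ((List.prefix_append_right_inj _).2 (List.prefix_append _ _))
  obtain ⟨hnext', -⟩ := (blockIs_iff hpq).1 hL
  have he := (occ_append.1 hLe).2
  rw [← hnext'] at he ⊢
  refine ⟨i + 1 + 1, rfl, blockIs_long_of_occ hpq hc hz he, ?_, ?_⟩
  · rwa [add_sub_cancel_right]
  · rwa [show i + 1 + 1 - 2 = i by ring]

lemma formB_of_occ (h : Occ v t (sw α (n + 2) ++ (sw α (n + 1) ++ (z ++ [e])))) :
    FormB α v (t + (sw α (n + 2)).length + (sw α (n + 1)).length) (n + 1) c := by
  have hLz : Occ v t (z ++ [e]) := h.of_isPrefix <| by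
    rw [← List.append_assoc, hz.append_eq.1]
    exact ⟨(!e) :: (z ++ [e]), by simp⟩
  obtain ⟨i, rfl⟩ := hz.mem_of_occ (hc.isCutSet hpq) (hLz.of_isPrefix (List.prefix_append _ _))
  have hL := blockIs_long_of_occ hpq hc hz hLz
  obtain ⟨hnext, -⟩ := (blockIs_iff hpq).1 hL
  have hSe := (occ_append.1 h).2
  rw [← hnext] at hSe ⊢
  have hS := blockIs_short_of_occ hpq hc hz <| hSe.of_isPrefix <| hz.concat_prefix_short.trans
    ((List.prefix_append_right_inj _).2 (List.prefix_append _ _))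
  obtain ⟨hnext', -⟩ := (blockIs_iff hpq).1 hS
  have he := (occ_append.1 hSe).2
  rw [← hnext'] at he ⊢
  refine ⟨i + 1 + 1, rfl, blockIs_long_of_occ hpq hc hz he, ?_, ?_⟩
  · rwa [add_sub_cancel_right]
  · rwa [show i + 1 + 1 - 2 = i by ring]

end Partition

/-! ### The two forms -/

section Forms

variable {α : ℝ} {v : ℤ → Bool} {m : ℤ} {c : ℤ → ℤ} {n : ℕ}

variable (hirr : Irrational α) (hα : α ∈ Set.Ioo 0 1) (hv : v ∈ hull α)
  (hswap : exchange v m ∈ hull α) (hne : v (m - 1) ≠ v m)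

include hirr hα hv hswap hne

lemma occ_around {z : List Bool} {e : Bool}
    (hz : IsStandardPair (sw α (n + 1)) (sw α (n + 2)) z e) :
    Occ v (m - 2 - z.length) (z ++ [v (m - 1), v m] ++ (z ++ [e])) := by
  have hze := hz.occ_v0_concat hirr hα
  have hleft := occ_left hα hv hswap hne (hze.of_isPrefix (List.prefix_append _ _))
  have hright := occ_right hα hv hswap hne hze
  rw [hz.append_central.1] at hleft
  have hpair : Occ v (m - 2) [v (m - 1), v m] := by
    rw [← List.singleton_append, occ_append, occ_singleton, occ_singleton]
    exact ⟨congrArg v (by ring), congrArg v (by simp; ring)⟩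
  refine occ_append.2 ⟨occ_append.2 ⟨hleft, ?_⟩, ?_⟩
  · rwa [sub_add_cancel]
  · convert hright using 1
    simp only [List.length_append, List.length_cons, List.length_nil]
    lia

variable (hc : IsPartition α v (n + 1) c)

include hc

lemma formA_iff : FormA α v m (n + 1) c ↔ v m = decide (Odd (n + 1)) := by
  obtain ⟨z, hz⟩ := exists_isStandardPair α (n + 1)
  have hpq := one_le_pq hirr hα 0
  refine ⟨FormA.apply_eq hpq hz, fun he => ?_⟩
  have h := occ_around hirr hα hv hswap hne hz
  rw [Bool.eq_not_of_ne hne, he, ← hz.append_eq.2, List.append_assoc] at h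
  convert formA_of_occ hpq hc hz h using 1
  have := hz.length_add_two
  lia

lemma formB_iff : FormB α v m (n + 1) c ↔ v m = !decide (Odd (n + 1)) := by
  obtain ⟨z, hz⟩ := exists_isStandardPair α (n + 1)
  have hpq := one_le_pq hirr hα 0
  refine ⟨FormB.apply_eq hpq hz, fun he => ?_⟩
  have h := occ_around hirr hα hv hswap hne hz
  rw [Bool.eq_not_of_ne hne, he, Bool.not_not, ← hz.append_eq.1, List.append_assoc] at h
  convert formB_of_occ hpq hc hz h using 1
  have := hz.length_add_two
  lia

end Forms

/-- Lemma 5.2. Suppose `v ∈ Ω`, `v(m-1) ≠ v(m)`, and the sequence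
obtained from `v` by exchanging the values at sites `m-1` and `m` again belongs to `Ω`.
Then for every `n ≥ 1` the `(n-1, n)`-partition of `v` has form (a) or form (b) around
`m`; moreover form (a) at level `n` forces form (b) at level `n+1`, and form (b) at
level `n` forces form (a) at level `n+1`. -/
theorem exchange_partition_form (α : ℝ) (hirr : Irrational α) (h0 : 0 < α) (h1 : α < 1)
    (v : ℤ → Bool) (hv : v ∈ hull α) (m : ℤ) (hne : v (m - 1) ≠ v m)
    (hswap : (fun z : ℤ => if z = m - 1 then v m else if z = m then v (m - 1) else v z)
        ∈ hull α) :
    ∀ n : ℕ, 1 ≤ n → ∀ c : ℤ → ℤ, IsPartition α v n c →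
      (FormA α v m n c ∨ FormB α v m n c) ∧
      (∀ c' : ℤ → ℤ, IsPartition α v (n + 1) c' →
        (FormA α v m n c → FormB α v m (n + 1) c') ∧
        (FormB α v m n c → FormA α v m (n + 1) c')) := by
  have hα : α ∈ Set.Ioo 0 1 := ⟨h0, h1⟩
  intro n hn c hc
  obtain ⟨n, rfl⟩ := Nat.exists_eq_add_of_le' hn
  rw [formA_iff hirr hα hv hswap hne hc, formB_iff hirr hα hv hswap hne hc]
  refine ⟨Bool.eq_or_eq_not _ _, fun c' hc' => ?_⟩
  rw [formA_iff hirr hα hv hswap hne hc', formB_iff hirr hα hv hswap hne hc',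
    decide_odd_add_one (n + 1), Bool.not_not]
  exact ⟨id, id⟩

end
end

section
/- The following mirror symmetries hold: (i) v_{1/2}(−1−n) = v_{1/2}(n) for all n ∈ ℤ, and v_{1/2}(−1) = v_{1/2}(0) = 1; (ii) v_{α/2}(−1−n) = v_{α/2}(−1+n) for all n ∈ ℤ, and v_{α/2}(−1) = 1; (iii) with θ_B = 1/2 − 3α/2, v_{θ_B}(1−n) = v_{θ_B}(1+n) for all n ∈ ℤ, and v_{θ_B}(1) = 0. -/
open scoped Classical

/-- The circle map sequence with phase `θ`: `v_θ(n) = 1` iff the fractional part of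
`nα + θ` lies in `[1-α, 1)`. -/
noncomputable def vth (α θ : ℝ) (n : ℤ) : Bool :=
  decide (1 - α ≤ Int.fract ((n : ℝ) * α + θ))

/-!
`v_θ(n) = 1` exactly when the half-open interval from `nα + θ` to `(n + 1)α + θ` contains an
integer. If `2θ = pα + q` with `p, q ∈ ℤ`, then `x ↦ q - x` preserves the integers and carries the
`n`-th interval to the `(-1 - p - n)`-th, up to exchanging the open and the closed end. This
exchange is harmless as long as no `nα + θ` is an integer, which holds for irrational `α` as soon as
`p` or `q` is odd.
-/

theorem one_sub_le_fract_iff_exists_intCast_mem_Ioc {R : Type*} [CommRing R] [LinearOrder R]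
    [IsStrictOrderedRing R] [FloorRing R] {a x : R} :
    1 - a ≤ Int.fract x ↔ ∃ m : ℤ, (m : R) ∈ Set.Ioc x (x + a) := by
  have fract_add_floor : Int.fract x + ⌊x⌋ = x := Int.fract_add_floor x
  constructor
  · intro h
    refine ⟨⌊x⌋ + 1, ?_, ?_⟩ <;> push_cast
    · exact Int.lt_floor_add_one x
    · linarith
  · rintro ⟨m, hxm, hmx⟩
    have floor_add_one_le : (⌊x⌋ : R) + 1 ≤ m := mod_cast Int.floor_lt.2 hxm
    linarith

section CircleMap

variable {α θ : ℝ} {p q : ℤ}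

theorem vth_eq_true_iff_exists_intCast_mem_Ioc {n : ℤ} :
    vth α θ n = true ↔ ∃ m : ℤ, (m : ℝ) ∈ Set.Ioc (n * α + θ) ((n + 1) * α + θ) := by
  rw [vth, decide_eq_true_iff, one_sub_le_fract_iff_exists_intCast_mem_Ioc,
    show n * α + θ + α = (n + 1) * α + θ by ring]

theorem intCast_mul_add_ne_intCast (hα : Irrational α) (hθ : 2 * θ = p * α + q)
    (hpq : Odd p ∨ Odd q) (n m : ℤ) : n * α + θ ≠ m := by
  intro h
  have doubled : ((2 * n + p : ℤ) : ℝ) * α = (2 * m - q : ℤ) := by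
    push_cast
    linear_combination 2 * h - hθ
  have slope_eq_zero : 2 * n + p = 0 := by
    by_contra slope_ne_zero
    exact (hα.intCast_mul slope_ne_zero).ne_int _ doubled
  have offset_eq_zero : 2 * m - q = 0 := by
    rw [slope_eq_zero, Int.cast_zero, zero_mul] at doubled
    exact_mod_cast doubled.symm
  rcases hpq with ⟨r, hr⟩ | ⟨r, hr⟩ <;> omega

theorem vth_eq_true_of_add_eq {j k : ℤ} (hθ : 2 * θ = p * α + q)
    (hint : ∀ n m : ℤ, n * α + θ ≠ m) (hjk : j + k = -1 - p) (hj : vth α θ j = true) :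
    vth α θ k = true := by
  obtain ⟨m, hlo, hhi⟩ := vth_eq_true_iff_exists_intCast_mem_Ioc.1 hj
  have hjk' : (j : ℝ) + k = -1 - p := mod_cast hjk
  have reflect_right : q - ((j + 1) * α + θ) = k * α + θ := by
    linear_combination -hθ - α * hjk'
  have reflect_left : q - (j * α + θ) = (k + 1) * α + θ := by
    linear_combination -hθ - α * hjk'
  have hhi' : m < (j + 1) * α + θ := hhi.lt_of_ne (mod_cast (hint (j + 1) m).symm)
  refine vth_eq_true_iff_exists_intCast_mem_Ioc.2 ⟨q - m, ?_, ?_⟩ <;> rw [Int.cast_sub]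
  · rw [← reflect_right]
    exact sub_lt_sub_left hhi' _
  · rw [← reflect_left]
    exact sub_le_sub_left hlo.le _

theorem vth_eq_of_add_eq {j k : ℤ} (hα : Irrational α) (hθ : 2 * θ = p * α + q)
    (hpq : Odd p ∨ Odd q) (hjk : j + k = -1 - p) : vth α θ j = vth α θ k := by
  have hint := intCast_mul_add_ne_intCast hα hθ hpq
  exact Bool.eq_iff_iff.2 ⟨vth_eq_true_of_add_eq hθ hint hjk,
    vth_eq_true_of_add_eq hθ hint (by rw [add_comm, hjk])⟩

end CircleMap

section Values

variable {α : ℝ}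

theorem vth_one_half_neg_one (hα : 1 / 2 < α) : vth α (1 / 2) (-1) = true :=
  vth_eq_true_iff_exists_intCast_mem_Ioc.2 ⟨0, by push_cast; linarith, by norm_num⟩

theorem vth_one_half_zero (hα : 1 / 2 ≤ α) : vth α (1 / 2) 0 = true :=
  vth_eq_true_iff_exists_intCast_mem_Ioc.2 ⟨1, by norm_num, by push_cast; linarith⟩

theorem vth_div_two_neg_one (hα : 0 < α) : vth α (α / 2) (-1) = true :=
  vth_eq_true_iff_exists_intCast_mem_Ioc.2 ⟨0, by push_cast; linarith, by push_cast; linarith⟩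

theorem vth_one_half_sub_three_mul_div_two_one (hα : α < 1) :
    vth α (1 / 2 - 3 * α / 2) 1 = false := by
  rw [← Bool.not_eq_true, vth_eq_true_iff_exists_intCast_mem_Ioc]
  rintro ⟨m, hlo, hhi⟩
  push_cast at hlo hhi
  have m_pos : 0 < m := by exact_mod_cast (by linarith : (0 : ℝ) < m)
  have m_lt_one : m < 1 := by exact_mod_cast (by linarith : (m : ℝ) < 1)
  omega

end Values

theorem inv_goldenRatio_eq : Real.goldenRatio⁻¹ = (√5 - 1) / 2 := by
  rw [Real.inv_goldenRatio, Real.goldenConj]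
  ring

theorem one_half_lt_inv_goldenRatio : 1 / 2 < Real.goldenRatio⁻¹ := by
  rw [one_div]
  exact inv_strictAnti₀ Real.goldenRatio_pos Real.goldenRatio_lt_two

theorem inv_goldenRatio_lt_one : Real.goldenRatio⁻¹ < 1 :=
  inv_lt_one_of_one_lt₀ Real.one_lt_goldenRatio

theorem mirror_symmetric_elements_general {α : ℝ} (hα : Irrational α) (hlo : 1 / 2 < α)
    (hhi : α < 1) :
    ((∀ n : ℤ, vth α (1 / 2) (-1 - n) = vth α (1 / 2) n) ∧
      vth α (1 / 2) (-1) = true ∧ vth α (1 / 2) 0 = true) ∧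
    ((∀ n : ℤ, vth α (α / 2) (-1 - n) = vth α (α / 2) (-1 + n)) ∧
      vth α (α / 2) (-1) = true) ∧
    ((∀ n : ℤ, vth α (1 / 2 - 3 * α / 2) (1 - n) = vth α (1 / 2 - 3 * α / 2) (1 + n)) ∧
      vth α (1 / 2 - 3 * α / 2) 1 = false) := by
  refine ⟨⟨fun n => ?_, vth_one_half_neg_one hlo, vth_one_half_zero hlo.le⟩,
    ⟨fun n => ?_, vth_div_two_neg_one (by linarith)⟩,
    ⟨fun n => ?_, vth_one_half_sub_three_mul_div_two_one hhi⟩⟩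
  · exact vth_eq_of_add_eq (p := 0) (q := 1) hα (by norm_num) (by decide) (by ring)
  · exact vth_eq_of_add_eq (p := 1) (q := 0) hα (by push_cast; ring) (by decide) (by ring)
  · exact vth_eq_of_add_eq (p := -3) (q := 1) hα (by push_cast; ring) (by decide) (by ring)

/-- Mirror symmetries of the symmetric elements of the Fibonacci hull:
(i) `v_{1/2}(-1-n) = v_{1/2}(n)` and `v_{1/2}(-1) = v_{1/2}(0) = 1`;
(ii) `v_{α/2}(-1-n) = v_{α/2}(-1+n)` and `v_{α/2}(-1) = 1`;
(iii) with `θ_B = 1/2 - 3α/2`, `v_{θ_B}(1-n) = v_{θ_B}(1+n)` and `v_{θ_B}(1) = 0`. -/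
theorem mirror_symmetric_elements (α : ℝ) (hα : α = (Real.sqrt 5 - 1) / 2) :
    ((∀ n : ℤ, vth α (1 / 2) (-1 - n) = vth α (1 / 2) n) ∧
      vth α (1 / 2) (-1) = true ∧ vth α (1 / 2) 0 = true) ∧
    ((∀ n : ℤ, vth α (α / 2) (-1 - n) = vth α (α / 2) (-1 + n)) ∧
      vth α (α / 2) (-1) = true) ∧
    ((∀ n : ℤ, vth α (1 / 2 - 3 * α / 2) (1 - n) = vth α (1 / 2 - 3 * α / 2) (1 + n)) ∧
      vth α (1 / 2 - 3 * α / 2) 1 = false) := by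
  obtain rfl : α = Real.goldenRatio⁻¹ := hα.trans inv_goldenRatio_eq.symm
  exact mirror_symmetric_elements_general Real.goldenRatio_irrational.inv
    one_half_lt_inv_goldenRatio inv_goldenRatio_lt_one
end
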